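/- arXiv:2206.05208 — 2 statements merged into one kernel-verified Lean document; each statement's English description precedes it below -/
import Mathlib

section
/- For every finite alphabet Σ with |Σ| ≥ 2, let R = ⋃_{a ∈ Σ} R_a, where R_a is the set of all square pictures over the single letter a of size at least (2,2). Then R is tiling recognizable, and every k-tiling system (Σ, Γ, T_k, π), for any k ≥ 2, recognizing R satisfies |Γ| ≥ 2·|Σ|, i.e., its alphabetic ratio is at least 2. -/
/-- A picture over alphabet `A`: a rectangular array with at least one row
and one column. -/
structure Picture (A : Type) : Type where
  rows : ℕ
  cols : ℕ
  rows_pos : 0 < rows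
  cols_pos : 0 < cols
  pix : Fin rows → Fin cols → A

namespace Picture

/-- Pixelwise projection of a picture along a map of alphabets. -/
def map {A B : Type} (f : A → B) (p : Picture A) : Picture B :=
  ⟨p.rows, p.cols, p.rows_pos, p.cols_pos, fun i j => f (p.pix i j)⟩

/-- The pixel at (i,j) (0-based), or `none` if out of range. -/
def pget {A : Type} (p : Picture A) (i j : ℕ) : Option A :=
  if h : i < p.rows ∧ j < p.cols then some (p.pix ⟨i, h.1⟩ ⟨j, h.2⟩) else none

/-- The pixel at position (i,j) of the bordered picture of `p`, where the
border symbol `#` is `none`; row 0 and column 0 are border rows, the content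
occupies rows `1..p.rows` and columns `1..p.cols`, and every other position
is a border (`#`) position. -/
def bpix {A : Type} (p : Picture A) (i j : ℕ) : Option A :=
  if h : 1 ≤ i ∧ i ≤ p.rows ∧ 1 ≤ j ∧ j ≤ p.cols then
    some (p.pix ⟨i - 1, by omega⟩ ⟨j - 1, by omega⟩)
  else none

end Picture

/-- A `k`-tile over `A ∪ {#}`, the border symbol `#` being `none`. -/
abbrev BTile (A : Type) (k : ℕ) := Fin k → Fin k → Option A

/-- Number of rows of the bordered version of `p` used for `k`-tiles:
one border row on top and at least one at the bottom, with as many extra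
border rows at the bottom as needed for `k × k` subpictures to exist. -/
def borderRows {A : Type} (p : Picture A) (k : ℕ) : ℕ := max (p.rows + 2) k

/-- Number of columns of the bordered version of `p` used for `k`-tiles. -/
def borderCols {A : Type} (p : Picture A) (k : ℕ) : ℕ := max (p.cols + 2) k

/-- The set of `k`-tiles of the bordered picture of `p`. -/
def tilesOf {A : Type} (k : ℕ) (p : Picture A) : Set (BTile A k) :=
  { t | ∃ i j : ℕ, i + k ≤ borderRows p k ∧ j + k ≤ borderCols p k ∧
      ∀ a b : Fin k, t a b = p.bpix (i + (a : ℕ)) (j + (b : ℕ)) }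

/-- The `k`-strictly-locally-testable language defined by the tile set `T`:
all pictures each of whose `k`-tiles (of the bordered picture) is in `T`. -/
def SLTLang {A : Type} (k : ℕ) (T : Set (BTile A k)) : Set (Picture A) :=
  { p | tilesOf k p ⊆ T }

/-- The language `R = ⋃_{a ∈ Sig} R_a` of all square pictures of size at
least `(2,2)` all of whose pixels carry one and the same letter. -/
def unionSquares (Sig : Type) : Set (Picture Sig) :=
  { p | p.rows = p.cols ∧ 2 ≤ p.rows ∧ ∃ a : Sig, ∀ i j, p.pix i j = a }

/-- Local conditions on the four cells of a `2 × 2` tile, for squares with a marked diagonal. -/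
def GoodTile {S : Type} (t : BTile (S × Bool) 2) : Prop :=
  (∀ x y x' y' g h, t x y = some g → t x' y' = some h → g.1 = h.1) ∧
  (∀ g, t 0 0 = none → t 0 1 = none → t 1 0 = none → t 1 1 = some g → g.2 = true) ∧
  (∀ f g, t 0 0 = none → t 0 1 = none → t 1 0 = some f → t 1 1 = some g → g.2 = false) ∧
  (∀ f g, t 0 0 = none → t 1 0 = none → t 0 1 = some f → t 1 1 = some g → g.2 = false) ∧
  (∀ g h, t 0 0 = some g → t 1 1 = some h → g.2 = h.2) ∧
  (∀ g, t 0 0 = some g → t 0 1 = none → t 1 0 = none → t 1 1 = none → g.2 = true) ∧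
  (∀ g, t 0 0 = none → t 0 1 = none → t 1 0 = some g → t 1 1 = none → g.2 = false)

/-- The monochromatic square with marked diagonal. -/
def diagPic {S : Type} (a : S) (n : ℕ) (hn : 0 < n) : Picture (S × Bool) :=
  ⟨n, n, hn, hn, fun i j => (a, decide ((i : ℕ) = j))⟩

theorem diagPic_bpix {S : Type} (a : S) (n : ℕ) (hn : 0 < n) (i j : ℕ) :
    (diagPic a n hn).bpix i j =
      if 1 ≤ i ∧ i ≤ n ∧ 1 ≤ j ∧ j ≤ n then some (a, decide (i = j)) else none := by
  unfold Picture.bpix diagPic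
  by_cases h : 1 ≤ i ∧ i ≤ n ∧ 1 ≤ j ∧ j ≤ n
  · have : (i - 1 = j - 1) ↔ i = j := by omega
    simp [h, this]
  · simp [h]

theorem diagPic_mem {S : Type} (a : S) (n : ℕ) (hn : 0 < n) (h2 : 2 ≤ n) :
    diagPic a n hn ∈ SLTLang 2 {t : BTile (S × Bool) 2 | GoodTile t} := by
  rintro t ⟨i, j, hi, hj, ht⟩
  have hi' : i ≤ n := by simp [borderRows, diagPic] at hi; omega
  have hj' : j ≤ n := by simp [borderCols, diagPic] at hj; omega
  simp only [diagPic_bpix] at ht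
  refine ⟨?_, ?_, ?_, ?_, ?_, ?_, ?_⟩
  · intro x y x' y' g h hg hh
    rw [ht] at hg hh
    split_ifs at hg hh
    simp at hg hh
    rw [← hg, ← hh]
  all_goals
    simp only [ht, Fin.val_zero, Fin.val_one, ite_eq_right_iff, Option.ite_none_right_eq_some,
      Option.some.injEq, Prod.forall, Prod.mk.injEq, reduceCtorEq, imp_false]
    intros
    grind

theorem Picture.bpix_in {A : Type} (p : Picture A) (i j : ℕ) (hi : i < p.rows) (hj : j < p.cols) :
    p.bpix (i + 1) (j + 1) = some (p.pix ⟨i, hi⟩ ⟨j, hj⟩) := by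
  unfold Picture.bpix
  rw [dif_pos (by omega)]
  rfl

theorem Picture.bpix_out {A : Type} (p : Picture A) (i j : ℕ)
    (h : ¬ (1 ≤ i ∧ i ≤ p.rows ∧ 1 ≤ j ∧ j ≤ p.cols)) :
    p.bpix i j = none := by
  unfold Picture.bpix
  rw [dif_neg h]

theorem good_sq {S : Type} (p : Picture (S × Bool))
    (hp : p ∈ SLTLang 2 {t : BTile (S × Bool) 2 | GoodTile t}) :
    p.rows = p.cols ∧ 2 ≤ p.rows ∧ ∃ a : S, ∀ i j, (p.pix i j).1 = a := by
  have key : ∀ i j, i ≤ p.rows → j ≤ p.cols →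
      GoodTile (fun a b : Fin 2 => p.bpix (i + (a : ℕ)) (j + (b : ℕ))) := by
    intro i j hi hj
    exact hp ⟨i, j, by simp [borderRows]; omega, by simp [borderCols]; omega, fun _ _ => rfl⟩
  have hr := p.rows_pos
  have hc := p.cols_pos
  have bits : ∀ i j (hi : i < p.rows) (hj : j < p.cols),
      (p.pix ⟨i, hi⟩ ⟨j, hj⟩).2 = decide (i = j) := by
    intro i
    induction i with
    | zero =>
      intro j hi hj
      cases j with
      | zero =>
        have := (key 0 0 (by omega) (by omega)).2.1 (p.pix ⟨0, hi⟩ ⟨0, hj⟩)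
          (p.bpix_out _ _ (by simp)) (p.bpix_out _ _ (by simp)) (p.bpix_out _ _ (by simp))
          (p.bpix_in 0 0 hi hj)
        simpa using this
      | succ j =>
        have := (key 0 (j + 1) (by omega) (by omega)).2.2.1 _ (p.pix ⟨0, hi⟩ ⟨j + 1, hj⟩)
          (p.bpix_out _ _ (by simp)) (p.bpix_out _ _ (by simp))
          (p.bpix_in 0 j hi (by omega))
          (p.bpix_in 0 (j + 1) hi hj)
        simpa using this
    | succ i ih =>
      intro j hi hj
      cases j with
      | zero =>
        have := (key (i + 1) 0 (by omega) (by omega)).2.2.2.1 _ (p.pix ⟨i + 1, hi⟩ ⟨0, hj⟩)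
          (p.bpix_out _ _ (by simp)) (p.bpix_out _ _ (by simp))
          (p.bpix_in i 0 (by omega) hj)
          (p.bpix_in (i + 1) 0 hi hj)
        simpa using this
      | succ j =>
        have := (key (i + 1) (j + 1) (by omega) (by omega)).2.2.2.2.1 _ _
          (p.bpix_in i j (by omega) (by omega))
          (p.bpix_in (i + 1) (j + 1) hi hj)
        rw [← this, ih j (by omega) (by omega)]
        simp
  have sq : p.rows = p.cols := by
    obtain ⟨r, hr'⟩ : ∃ r, p.rows = r + 1 := ⟨p.rows - 1, by omega⟩
    obtain ⟨c, hc'⟩ : ∃ c, p.cols = c + 1 := ⟨p.cols - 1, by omega⟩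
    have := (key (r + 1) (c + 1) (by omega) (by omega)).2.2.2.2.2.1 _
          (p.bpix_in r c (by omega) (by omega))
          (p.bpix_out _ _ (by simp; omega)) (p.bpix_out _ _ (by simp; omega))
          (p.bpix_out _ _ (by simp; omega))
    rw [bits] at this
    simp at this
    omega
  have h2 : 2 ≤ p.rows := by
    by_contra hlt
    have := (key 0 1 (by omega) (by omega)).2.2.2.2.2.2 _
      (p.bpix_out _ _ (by simp)) (p.bpix_out _ _ (by simp))
      (p.bpix_in 0 0 hr hc) (p.bpix_out _ _ (by simp; omega))
    rw [bits] at this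
    simp at this
  refine ⟨sq, h2, (p.pix ⟨0, hr⟩ ⟨0, hc⟩).1, ?_⟩
  have row0 : ∀ j (hj : j < p.cols), (p.pix ⟨0, hr⟩ ⟨j, hj⟩).1 = (p.pix ⟨0, hr⟩ ⟨0, hc⟩).1 := by
    intro j
    induction j with
    | zero => intro _; rfl
    | succ j ih =>
      intro hj
      rw [← ih (by omega)]
      exact (key 1 (j + 1) (by omega) (by omega)).1 0 1 0 0 _ _
        (p.bpix_in 0 (j + 1) hr hj) (p.bpix_in 0 j hr (by omega))
  have all : ∀ i j (hi : i < p.rows) (hj : j < p.cols),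
      (p.pix ⟨i, hi⟩ ⟨j, hj⟩).1 = (p.pix ⟨0, hr⟩ ⟨0, hc⟩).1 := by
    intro i
    induction i with
    | zero => intro j _ hj; exact row0 j hj
    | succ i ih =>
      intro j hi hj
      rw [← ih j (by omega) hj]
      exact (key (i + 1) (j + 1) (by omega) (by omega)).1 1 0 0 0 _ _
        (p.bpix_in (i + 1) j hi hj) (p.bpix_in i j (by omega) hj)
  exact fun i j => all i j i.2 j.2

/-- The monochromatic rectangle. -/
def constPic {S : Type} (a : S) (m n : ℕ) (hm : 0 < m) (hn : 0 < n) : Picture S :=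
  ⟨m, n, hm, hn, fun _ _ => a⟩

theorem constPic_bpix {S : Type} (a : S) (m n : ℕ) (hm : 0 < m) (hn : 0 < n) (i j : ℕ) :
    (constPic a m n hm hn).bpix i j =
      if 1 ≤ i ∧ i ≤ m ∧ 1 ≤ j ∧ j ≤ n then some a else none := by
  unfold Picture.bpix constPic
  by_cases h : 1 ≤ i ∧ i ≤ m ∧ 1 ≤ j ∧ j ≤ n <;> simp [h]

/-- Stretching a monochromatic `k × k` square by one column creates no new `k`-tile. -/
theorem tiles_stretch {S : Type} (a : S) (k : ℕ) (hk : 0 < k) :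
    tilesOf k (constPic a k (k + 1) hk (by omega)) ⊆ tilesOf k (constPic a k k hk hk) := by
  rintro t ⟨i, j, hi, hj, ht⟩
  simp only [constPic_bpix] at ht
  have hi' : i ≤ 2 := by simp [borderRows, constPic] at hi; omega
  have hj' : j ≤ 3 := by simp [borderCols, constPic] at hj; omega
  refine ⟨i, if j ≤ 1 then j else j - 1, hi, ?_, ?_⟩
  · simp only [borderCols, constPic]
    split_ifs <;> omega
  · intro x y
    rw [ht, constPic_bpix]
    have := y.2
    congr 1
    apply propext
    split_ifs <;> omega

/-- For every finite alphabet with `|Σ| ≥ 2`, the language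
`R = ⋃_{a ∈ Σ} R_a` of monochromatic squares of size at least 2 is tiling
recognizable, and every `k`-tiling system (`k ≥ 2`) recognizing it has a
local alphabet of cardinality at least `2·|Σ|` (alphabetic ratio ≥ 2). -/
theorem minimal_alphabetic_ratio :
    ∀ (Sig : Type) (_ : Fintype Sig), 2 ≤ Fintype.card Sig →
      (∃ (Gam : Type) (_ : Fintype Gam) (T : Set (BTile Gam 2)) (π : Gam → Sig),
        unionSquares Sig = Picture.map π '' SLTLang 2 T) ∧
      (∀ k : ℕ, 2 ≤ k →
        ∀ (Gam : Type) (_ : Fintype Gam) (T : Set (BTile Gam k)) (π : Gam → Sig),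
          unionSquares Sig = Picture.map π '' SLTLang k T →
          2 * Fintype.card Sig ≤ Fintype.card Gam) := by
  classical
  intro Sig _ _
  constructor
  · refine ⟨Sig × Bool, inferInstance, {t | GoodTile t}, Prod.fst, ?_⟩
    ext p
    constructor
    · obtain ⟨r, c, hr, hc, f⟩ := p
      rintro ⟨h1, h2, a, ha⟩
      dsimp only at h1 h2 ha
      subst h1
      refine ⟨diagPic a r hr, diagPic_mem a r hr h2, ?_⟩
      have : f = fun _ _ => a := by funext i j; exact ha i j
      subst this
      rfl
    · rintro ⟨q, hq, rfl⟩
      exact good_sq q hq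
  · intro k hk Gam _ T π hR
    by_contra hlt
    -- some letter has at most one preimage
    obtain ⟨a, ha⟩ : ∃ a : Sig, (Finset.univ.filter (fun g => π g = a)).card ≤ 1 := by
      by_contra hno
      push Not at hno
      apply hlt
      have h := Finset.mul_card_image_le_card_of_maps_to
        (s := (Finset.univ : Finset Gam)) (t := (Finset.univ : Finset Sig)) (f := π)
        (fun _ _ => Finset.mem_univ _) 2 (fun b _ => hno b)
      simpa using h
    have hk0 : 0 < k := by omega
    have hmem : constPic a k k hk0 hk0 ∈ unionSquares Sig := ⟨rfl, hk, a, fun _ _ => rfl⟩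
    rw [hR] at hmem
    obtain ⟨q, hq, hqe⟩ := hmem
    obtain ⟨r, c, hr, hc, f⟩ := q
    simp only [Picture.map, constPic, Picture.mk.injEq] at hqe
    obtain ⟨h1, h2, h3⟩ := hqe
    subst h1
    subst h2
    have h3 := eq_of_heq h3
    have hf : ∀ i j, π (f i j) = a := fun i j => congrFun (congrFun h3 i) j
    have hconst : f = fun _ _ => f ⟨0, hr⟩ ⟨0, hc⟩ := by
      funext i j
      exact Finset.card_le_one.mp ha _ (by simp [hf]) _ (by simp [hf])
    have hx := hf ⟨0, hr⟩ ⟨0, hc⟩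
    generalize f ⟨0, hr⟩ ⟨0, hc⟩ = x at hconst hx
    subst hconst
    have hrect : Picture.map π (constPic x c (c + 1) hk0 (by omega)) ∈ unionSquares Sig := by
      rw [hR]
      exact ⟨_, (tiles_stretch x c hk0).trans hq, rfl⟩
    have := hrect.1
    simp [Picture.map, constPic] at this
end

section
/- If a picture language R ⊆ Σ^{++} is recognized by a tiling system with local alphabet Γ', then for every k ≥ 2 the padded language R^(k) ⊆ (Σ ∪ {$})^{++} is recognized by a tiling system with a local alphabet of cardinality |Γ'| + k + 1. -/
/-- The padded language `R^(k)` over `Σ ∪ {$}` (the padding symbol `$`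
being `none`): each picture of `R` is extended with between 1 and `k`
columns of `$` on the right and between 1 and `k` rows of `$` at the
bottom, so that both sides of the result are multiples of `k`. -/
def padded {Sig : Type} (k : ℕ) (R : Set (Picture Sig)) :
    Set (Picture (Option Sig)) :=
  { q | ∃ p ∈ R,
      p.rows < q.rows ∧ q.rows ≤ p.rows + k ∧
      p.cols < q.cols ∧ q.cols ≤ p.cols + k ∧
      k ∣ q.rows ∧ k ∣ q.cols ∧
      ∀ i j : ℕ, i < q.rows → j < q.cols → q.pget i j = some (p.pget i j) }

/-- Cyclic successor on counters. -/
def cycS (k c : ℕ) : ℕ := if c + 1 = k then 0 else c + 1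

theorem mod_succ_cyc (k i : ℕ) (hk : 2 ≤ k) : (i + 1) % k = cycS k (i % k) := by
  have h := Nat.mod_lt i (show 0 < k by omega)
  unfold cycS
  rw [Nat.add_mod, Nat.mod_eq_of_lt (show 1 < k by omega)]
  split_ifs with h1
  · rw [h1, Nat.mod_self]
  · exact Nat.mod_eq_of_lt (by omega)

/-- Local rules on the codes of a tile `[a b; c d]`. Codes: `k+2` is `#`,
`k+1` is a content symbol, `k` is the filler, smaller numbers are counters. -/
structure GoodTile_s14 (k a b c d : ℕ) : Prop where
  s1 : b = k + 1 → k + 1 ≤ a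
  s2 : d = k + 1 → k + 1 ≤ c
  s3 : c = k + 1 → k + 1 ≤ a
  s4 : d = k + 1 → k + 1 ≤ b
  s5 : a = k + 1 → b = k + 1 → c = k + 1 → d = k + 1
  s6 : a = k + 2 → b = k + 2 → c = k + 2 → d = k + 1
  s7 : a = k + 1 → b ≠ k + 2 ∧ c ≠ k + 2
  s8 : c = k + 1 → d ≠ k + 2
  s9 : b = k + 1 → d ≠ k + 2
  r1 : b = k + 2 → d = k + 2 → a ≠ k + 2 → c ≠ k + 2 → a < k ∧ c = cycS k a
  r2 : a = k + 2 → b = k + 2 → d = k + 2 → c = 1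
  r3 : b = k + 2 → d = k + 2 → c = k + 2 → a = 0
  r4 : a = k + 2 → c = k + 2 → b = k + 1 → d ≠ k + 1 → d = 1
  r5 : a = k + 1 → b = k + 1 → c ≠ k + 1 → d ≠ k + 1 → d = cycS k c
  r6 : (a = k + 1 ∨ a = k) → b = k → c < k → d = cycS k c ∧ d ≠ 0
  r7 : (a = k + 1 ∨ a = k) → b < k → c < k → c + 1 = k
  r8 : (a = k + 1 ∨ a = k) → c = a → b = k → d = k
  r9 : a = k + 2 → b = k + 2 → c < k → d = k + 2
  r10 : a < k → c ≠ k + 2 → c < k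
  r11 : a < k → b < k → c < k → d < k → d = b ∨ b ≠ 0

theorem exists_last (P : ℕ → Prop) (M : ℕ) (h1 : P 1) (hM : 1 ≤ M) (h : ¬ P M) :
    ∃ m, 1 ≤ m ∧ m < M ∧ P m ∧ ¬ P (m + 1) := by
  by_contra hc
  push Not at hc
  have : ∀ i, 1 ≤ i → i ≤ M → P i := by
    intro i hi
    induction i, hi using Nat.le_induction with
    | base => intro _; exact h1
    | succ i hi ih => intro h2; exact hc i hi (by omega) (ih (by omega))
  exact h (this M hM le_rfl)

theorem no_mult_bound (k m M : ℕ) (hk : 2 ≤ k)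
    (h : ∀ i, m + 1 ≤ i → i < M → i % k ≠ 0) : M ≤ m + k := by
  by_contra hc
  have h1 := Nat.div_add_mod m k
  have h2 := Nat.mod_lt m (show 0 < k by omega)
  refine h (k * (m / k) + k) (by omega) (by omega) ?_
  simp

theorem global_of_local (k M N : ℕ) (hk : 2 ≤ k) (hM : 1 ≤ M) (hN : 1 ≤ N)
    (f : ℕ → ℕ → ℕ)
    (hH : ∀ i j, f i j = k + 2 ↔ ¬ (1 ≤ i ∧ i ≤ M ∧ 1 ≤ j ∧ j ≤ N))
    (hle : ∀ i j, f i j ≤ k + 2)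
    (hg : ∀ i j, i ≤ M → j ≤ N →
      GoodTile_s14 k (f i j) (f i (j+1)) (f (i+1) j) (f (i+1) (j+1))) :
    ∃ m n, 1 ≤ m ∧ 1 ≤ n ∧ m < M ∧ M ≤ m + k ∧ n < N ∧ N ≤ n + k ∧ k ∣ M ∧ k ∣ N ∧
      ∀ i j, f i j = k + 1 ↔ (1 ≤ i ∧ i ≤ m ∧ 1 ≤ j ∧ j ≤ n) := by
  have hin : ∀ i j, f i j = k + 1 → (1 ≤ i ∧ i ≤ M ∧ 1 ≤ j ∧ j ≤ N) := by
    intro i j h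
    by_contra hc
    have := (hH i j).2 hc
    omega
  have hout : ∀ i j, ¬ (1 ≤ i ∧ i ≤ M ∧ 1 ≤ j ∧ j ≤ N) → f i j = k + 2 :=
    fun i j h => (hH i j).2 h
  have hne : ∀ i j, 1 ≤ i → i ≤ M → 1 ≤ j → j ≤ N → f i j ≤ k + 1 := by
    intro i j h1 h2 h3 h4
    have h5 : f i j ≠ k + 2 := fun h => (hH i j).1 h ⟨h1, h2, h3, h4⟩
    have := hle i j
    omega
  have h11 : f 1 1 = k + 1 :=
    (hg 0 0 (by omega) (by omega)).s6 (hout _ _ (by omega)) (hout _ _ (by omega))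
      (hout _ _ (by omega))
  have hup : ∀ i j, 1 ≤ i → f (i+1) j = k + 1 → f i j = k + 1 := by
    intro i j hi h
    have h1 := hin _ _ h
    have := (hg i j (by omega) (by omega)).s3 h
    have := hne i j hi (by omega) (by omega) (by omega)
    omega
  have hleft : ∀ i j, 1 ≤ j → f i (j+1) = k + 1 → f i j = k + 1 := by
    intro i j hj h
    have h1 := hin _ _ h
    have := (hg i j (by omega) (by omega)).s1 h
    have := hne i j (by omega) (by omega) (by omega) (by omega)
    omega
  have hup' : ∀ i i' j, 1 ≤ i → i ≤ i' → f i' j = k + 1 → f i j = k + 1 := by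
    intro i i' j hi hii
    induction i', hii using Nat.le_induction with
    | base => exact id
    | succ i' hi' ih => intro h; exact ih (hup i' j (by omega) h)
  have hleft' : ∀ i j j', 1 ≤ j → j ≤ j' → f i j' = k + 1 → f i j = k + 1 := by
    intro i j j' hj hjj
    induction j', hjj using Nat.le_induction with
    | base => exact id
    | succ j' hj' ih => intro h; exact ih (hleft i j' (by omega) h)
  obtain ⟨m, hm1, hmM, hmP, hmQ⟩ := exists_last (fun i => f i 1 = k + 1) M h11 hM (by
    intro h
    exact ((hg M 1 le_rfl hN).s7 h).2 (hout _ _ (by omega)))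
  obtain ⟨n, hn1, hnN, hnP, hnQ⟩ := exists_last (fun j => f 1 j = k + 1) N h11 hN (by
    intro h
    exact ((hg 1 N hM le_rfl).s7 h).1 (hout _ _ (by omega)))
  have hrect : ∀ i, 1 ≤ i → i ≤ m → ∀ j, 1 ≤ j → j ≤ n → f i j = k + 1 := by
    intro i hi
    induction i, hi using Nat.le_induction with
    | base => intro _ j hj hjn; exact hleft' 1 j n hj hjn hnP
    | succ i hi ihi =>
      intro him j hj
      induction j, hj using Nat.le_induction with
      | base => intro _; exact hup' (i+1) m 1 (by omega) him hmP
      | succ j hj ihj =>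
        intro hjn
        exact (hg i j (by omega) (by omega)).s5 (ihi (by omega) j hj (by omega))
          (ihi (by omega) (j+1) (by omega) hjn) (ihj (by omega))
  have hG : ∀ i j, f i j = k + 1 ↔ (1 ≤ i ∧ i ≤ m ∧ 1 ≤ j ∧ j ≤ n) := by
    intro i j
    constructor
    · intro h
      have h1 := hin _ _ h
      refine ⟨h1.1, ?_, h1.2.2.1, ?_⟩
      · by_contra hc
        exact hmQ (hup' (m+1) i 1 (by omega) (by omega) (hleft' i 1 j le_rfl h1.2.2.1 h))
      · by_contra hc
        exact hnQ (hleft' 1 (n+1) j (by omega) (by omega) (hup' 1 i j le_rfl h1.1 h))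
    · rintro ⟨h1, h2, h3, h4⟩
      exact hrect i h1 h2 j h3 h4
  have hpad : ∀ i j, 1 ≤ i → i ≤ M → 1 ≤ j → j ≤ N → (m < i ∨ n < j) → f i j ≤ k := by
    intro i j h1 h2 h3 h4 h5
    have h6 := hne i j h1 h2 h3 h4
    have h7 : f i j ≠ k + 1 := fun h => by have := (hG i j).1 h; omega
    omega
  have hmod : ∀ i, i % k < k := fun i => Nat.mod_lt i (by omega)
  -- the last column
  have hlast : ∀ i, 1 ≤ i → i ≤ M → f i N = i % k := by
    intro i hi
    induction i, hi using Nat.le_induction with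
    | base =>
      intro _
      rw [Nat.mod_eq_of_lt (show 1 < k by omega)]
      exact (hg 0 N (by omega) le_rfl).r2 (hout _ _ (by omega)) (hout _ _ (by omega))
        (hout _ _ (by omega))
    | succ i hi ih =>
      intro hiM
      have h1 := hpad i N hi (by omega) hN le_rfl (by omega)
      have h2 := hpad (i+1) N (by omega) (by omega) hN le_rfl (by omega)
      have := ((hg i N (by omega) le_rfl).r1 (hout _ _ (by omega)) (hout _ _ (by omega))
        (by omega) (by omega)).2
      rw [this, mod_succ_cyc k i hk, ih (by omega)]
  have hkM : k ∣ M := by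
    apply Nat.dvd_of_mod_eq_zero
    rw [← hlast M hM le_rfl]
    exact (hg M N le_rfl le_rfl).r3 (hout _ _ (by omega)) (hout _ _ (by omega))
      (hout _ _ (by omega))
  -- filler region
  have hX : ∀ i, 1 ≤ i → i ≤ m → ∀ j, n + 1 ≤ j → j < N → f i j = k := by
    intro i hi
    induction i, hi using Nat.le_induction with
    | base =>
      intro _ j hj hjN
      have h1 := hpad 1 j le_rfl (by omega) (by omega) (by omega) (by omega)
      have h2 := hpad 1 (j+1) le_rfl (by omega) (by omega) (by omega) (by omega)
      by_contra hc
      have := (hg 0 j (by omega) (by omega)).r9 (hout _ _ (by omega)) (hout _ _ (by omega))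
        (by simp only [Nat.zero_add]; omega)
      simp only [Nat.zero_add] at this
      omega
    | succ i hi ihi =>
      intro him j hj
      induction j, hj using Nat.le_induction with
      | base =>
        intro hjN
        have e1 := hrect i hi (by omega) n hn1 le_rfl
        have e2 := hrect (i+1) (by omega) him n hn1 le_rfl
        exact (hg i n (by omega) (by omega)).r8 (Or.inl e1) (by omega)
          (ihi (by omega) (n+1) le_rfl hjN)
      | succ j hj ihj =>
        intro hjN
        have e1 := ihi (by omega) j hj (by omega)
        have e2 := ihj (by omega)
        exact (hg i j (by omega) (by omega)).r8 (Or.inr e1) (by omega)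
          (ihi (by omega) (j+1) (by omega) hjN)
  -- row m+1
  have hrow : ∀ j, 1 ≤ j → j ≤ n → f (m+1) j = j % k := by
    intro j hj
    induction j, hj using Nat.le_induction with
    | base =>
      intro _
      rw [Nat.mod_eq_of_lt (show 1 < k by omega)]
      exact (hg m 0 (by omega) (by omega)).r4 (hout _ _ (by omega)) (hout _ _ (by omega))
        hmP hmQ
    | succ j hj ih =>
      intro hjn
      have h1 := hpad (m+1) j (by omega) (by omega) (by omega) (by omega) (by omega)
      have h2 := hpad (m+1) (j+1) (by omega) (by omega) (by omega) (by omega) (by omega)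
      rw [(hg m j (by omega) (by omega)).r5 (hrect m hm1 le_rfl j hj (by omega))
        (hrect m hm1 le_rfl (j+1) (by omega) hjn) (by omega) (by omega),
        mod_succ_cyc k j hk, ih (by omega)]
  have hrow2 : ∀ j, n + 1 ≤ j → j < N → f (m+1) j = j % k ∧ j % k ≠ 0 := by
    intro j hj
    induction j, hj using Nat.le_induction with
    | base =>
      intro hjN
      have e := hrow n hn1 le_rfl
      have := hmod n
      have h := (hg m n (by omega) (by omega)).r6 (Or.inl (hrect m hm1 le_rfl n hn1 le_rfl))
        (hX m hm1 le_rfl (n+1) le_rfl hjN) (by omega)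
      rw [e, ← mod_succ_cyc k n hk] at h
      exact ⟨h.1, by rw [← h.1]; exact h.2⟩
    | succ j hj ih =>
      intro hjN
      have e := (ih (by omega)).1
      have := hmod j
      have h := (hg m j (by omega) (by omega)).r6 (Or.inr (hX m hm1 le_rfl j hj (by omega)))
        (hX m hm1 le_rfl (j+1) (by omega) hjN) (by omega)
      rw [e, ← mod_succ_cyc k j hk] at h
      exact ⟨h.1, by rw [← h.1]; exact h.2⟩
  obtain ⟨L, rfl⟩ : ∃ L, N = L + 1 := ⟨N - 1, by omega⟩
  have hL : f (m+1) L = L % k := by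
    by_cases h : L ≤ n
    · exact hrow L (by omega) h
    · exact (hrow2 L (by omega) (by omega)).1
  have hLX : f m L = k + 1 ∨ f m L = k := by
    by_cases h : L ≤ n
    · exact Or.inl (hrect m hm1 le_rfl L (by omega) h)
    · exact Or.inr (hX m hm1 le_rfl L (by omega) (by omega))
  have hLk : L % k + 1 = k := by
    have := hmod L
    have := hmod m
    have e := hlast m hm1 (by omega)
    have := (hg m L (by omega) (by omega)).r7 hLX (by omega) (by omega)
    omega
  have hkN : k ∣ L + 1 := by
    apply Nat.dvd_of_mod_eq_zero
    rw [mod_succ_cyc k L hk]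
    simp [cycS, hLk]
  have hcol : ∀ i, m + 1 ≤ i → i ≤ M → f i L < k := by
    intro i hi
    induction i, hi using Nat.le_induction with
    | base => intro _; rw [hL]; exact hmod L
    | succ i hi ih =>
      intro hiM
      have := hpad (i+1) L (by omega) hiM (by omega) (by omega) (by omega)
      exact (hg i L (by omega) (by omega)).r10 (ih (by omega)) (by omega)
  have hnz : ∀ i, m + 1 ≤ i → i < M → i % k ≠ 0 := by
    intro i hi hiM h0
    have e1 := hlast i (by omega) (by omega)
    have e2 := hlast (i+1) (by omega) (by omega)
    have := hmod i
    have := hmod (i+1)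
    have e3 := mod_succ_cyc k i hk
    have := (hg i L (by omega) (by omega)).r11 (hcol i hi (by omega))
      (by omega) (hcol (i+1) (by omega) (by omega)) (by omega)
    rw [h0] at e3
    unfold cycS at e3
    split_ifs at e3 <;> omega
  exact ⟨m, n, hm1, hn1, hmM, no_mult_bound k m M hk hnz, hnN,
    no_mult_bound k n (L+1) hk (fun j h1 h2 => (hrow2 j h1 h2).2), hkM, hkN, hG⟩

/-- The code of the intended bordered picture at a position. -/
def codeF (k m n M N i j : ℕ) : ℕ :=
  if 1 ≤ i ∧ i ≤ M ∧ 1 ≤ j ∧ j ≤ N then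
    if i ≤ m ∧ j ≤ n then k + 1
    else if j = N then i % k
    else if i ≤ m then k
    else j % k
  else k + 2

theorem codeF_H {k m n M N i j : ℕ} (h : ¬ (1 ≤ i ∧ i ≤ M ∧ 1 ≤ j ∧ j ≤ N)) :
    codeF k m n M N i j = k + 2 := by
  unfold codeF; rw [if_neg h]

theorem codeF_G {k m n M N i j : ℕ} (h : 1 ≤ i ∧ i ≤ M ∧ 1 ≤ j ∧ j ≤ N)
    (h2 : i ≤ m ∧ j ≤ n) : codeF k m n M N i j = k + 1 := by
  unfold codeF; rw [if_pos h, if_pos h2]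

theorem codeF_C {k m n M N i j : ℕ} (h : 1 ≤ i ∧ i ≤ M ∧ 1 ≤ j ∧ j ≤ N)
    (h2 : ¬ (i ≤ m ∧ j ≤ n)) (h3 : j = N) : codeF k m n M N i j = i % k := by
  unfold codeF; rw [if_pos h, if_neg h2, if_pos h3]

theorem codeF_X {k m n M N i j : ℕ} (h : 1 ≤ i ∧ i ≤ M ∧ 1 ≤ j ∧ j ≤ N)
    (h2 : ¬ (i ≤ m ∧ j ≤ n)) (h3 : j ≠ N) (h4 : i ≤ m) : codeF k m n M N i j = k := by
  unfold codeF; rw [if_pos h, if_neg h2, if_neg h3, if_pos h4]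

theorem codeF_R {k m n M N i j : ℕ} (h : 1 ≤ i ∧ i ≤ M ∧ 1 ≤ j ∧ j ≤ N)
    (h2 : ¬ (i ≤ m ∧ j ≤ n)) (h3 : j ≠ N) (h4 : ¬ i ≤ m) :
    codeF k m n M N i j = j % k := by
  unfold codeF; rw [if_pos h, if_neg h2, if_neg h3, if_neg h4]

theorem mod_ne_zero_of_between (k a M i : ℕ) (hM : k ∣ M) (h1 : M ≤ a + k)
    (h2 : a < i) (h3 : i < M) : i % k ≠ 0 := by
  intro h
  have h4 : k ∣ M - i := (Nat.dvd_sub hM (Nat.dvd_of_mod_eq_zero h))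
  have := Nat.le_of_dvd (by omega) h4
  omega

theorem local_of_global (k m n M N : ℕ) (hk : 2 ≤ k) (hm : 1 ≤ m) (hn : 1 ≤ n)
    (hmM : m < M) (hMk : M ≤ m + k) (hnN : n < N) (hNk : N ≤ n + k)
    (hkM : k ∣ M) (hkN : k ∣ N) (i j : ℕ) (hi : i ≤ M) (hj : j ≤ N) :
    GoodTile_s14 k (codeF k m n M N i j) (codeF k m n M N i (j+1))
      (codeF k m n M N (i+1) j) (codeF k m n M N (i+1) (j+1)) := by
  have hmi := Nat.mod_lt i (show 0 < k by omega)
  have hmi' := Nat.mod_lt (i+1) (show 0 < k by omega)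
  have hmj := Nat.mod_lt j (show 0 < k by omega)
  have hmj' := Nat.mod_lt (j+1) (show 0 < k by omega)
  have ei := mod_succ_cyc k i hk
  have ej := mod_succ_cyc k j hk
  have z1 : i = 0 → (i + 1) % k = 1 := by
    rintro rfl; exact Nat.mod_eq_of_lt (by omega)
  have z2 : j = 0 → (j + 1) % k = 1 := by
    rintro rfl; exact Nat.mod_eq_of_lt (by omega)
  have y1 : i = M → i % k = 0 := by
    rintro rfl; exact Nat.mod_eq_zero_of_dvd hkM
  have y2 : j + 1 = N → (j + 1) % k = 0 := by
    intro h; rw [h]; exact Nat.mod_eq_zero_of_dvd hkN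
  have x1 : m < i → i < M → i % k ≠ 0 := mod_ne_zero_of_between k m M i hkM hMk
  have x2 : n < j + 1 → j + 1 < N → (j + 1) % k ≠ 0 :=
    mod_ne_zero_of_between k n N (j+1) hkN hNk
  have ej' : (j + 1) % k = 0 → j % k + 1 = k := by
    intro h; rw [ej] at h; unfold cycS at h; split_ifs at h <;> omega
  have ci : i = 0 ∨ (1 ≤ i ∧ i < m) ∨ i = m ∨ (m < i ∧ i < M) ∨ i = M := by omega
  have cj : j = 0 ∨ (1 ≤ j ∧ j < n) ∨ (j = n ∧ j + 1 < N) ∨ (j = n ∧ j + 1 = N) ∨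
    (n < j ∧ j + 1 < N) ∨ (n < j ∧ j + 1 = N) ∨ j = N := by omega
  rcases ci with ci | ci | ci | ci | ci <;>
  rcases cj with cj | cj | cj | cj | cj | cj | cj <;>
  · first
      | rw [codeF_H (i := i) (j := j) (by omega)]
      | rw [codeF_G (i := i) (j := j) (by omega) (by omega)]
      | rw [codeF_C (i := i) (j := j) (by omega) (by omega) (by omega)]
      | rw [codeF_X (i := i) (j := j) (by omega) (by omega) (by omega) (by omega)]
      | rw [codeF_R (i := i) (j := j) (by omega) (by omega) (by omega) (by omega)]
    first
      | rw [codeF_H (i := i) (j := j+1) (by omega)]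
      | rw [codeF_G (i := i) (j := j+1) (by omega) (by omega)]
      | rw [codeF_C (i := i) (j := j+1) (by omega) (by omega) (by omega)]
      | rw [codeF_X (i := i) (j := j+1) (by omega) (by omega) (by omega) (by omega)]
      | rw [codeF_R (i := i) (j := j+1) (by omega) (by omega) (by omega) (by omega)]
    first
      | rw [codeF_H (i := i+1) (j := j) (by omega)]
      | rw [codeF_G (i := i+1) (j := j) (by omega) (by omega)]
      | rw [codeF_C (i := i+1) (j := j) (by omega) (by omega) (by omega)]
      | rw [codeF_X (i := i+1) (j := j) (by omega) (by omega) (by omega) (by omega)]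
      | rw [codeF_R (i := i+1) (j := j) (by omega) (by omega) (by omega) (by omega)]
    first
      | rw [codeF_H (i := i+1) (j := j+1) (by omega)]
      | rw [codeF_G (i := i+1) (j := j+1) (by omega) (by omega)]
      | rw [codeF_C (i := i+1) (j := j+1) (by omega) (by omega) (by omega)]
      | rw [codeF_X (i := i+1) (j := j+1) (by omega) (by omega) (by omega) (by omega)]
      | rw [codeF_R (i := i+1) (j := j+1) (by omega) (by omega) (by omega) (by omega)]
    generalize i % k = ri at *
    generalize (i + 1) % k = ri' at *
    generalize j % k = rj at *
    generalize (j + 1) % k = rj' at *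
    clear hkM hkN
    constructor <;> omega

/-- Numeric code of a bordered pixel. -/
def codeP {A : Type} (k : ℕ) : Option (A ⊕ Fin (k + 1)) → ℕ
  | none => k + 2
  | some (Sum.inl _) => k + 1
  | some (Sum.inr v) => v.val

/-- Content part of a bordered pixel. -/
def contP {A : Type} {k : ℕ} : Option (A ⊕ Fin (k + 1)) → Option A
  | some (Sum.inl g) => some g
  | _ => none

/-- The projection of the new tiling system. -/
def projP {A S : Type} {k : ℕ} (f : A → S) : A ⊕ Fin (k + 1) → Option S
  | Sum.inl g => some (f g)
  | Sum.inr _ => none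

/-- The tiles of the new tiling system. -/
def padTiles {A : Type} (k : ℕ) (T' : Set (BTile A 2)) : Set (BTile (A ⊕ Fin (k + 1)) 2) :=
  { t | GoodTile_s14 k (codeP k (t 0 0)) (codeP k (t 0 1)) (codeP k (t 1 0)) (codeP k (t 1 1)) ∧
    ((∃ a b, codeP k (t a b) = k + 1) → (fun a b => contP (t a b)) ∈ T') }

theorem codeP_eq_G {A : Type} {k : ℕ} {o : Option (A ⊕ Fin (k + 1))}
    (h : codeP k o = k + 1) : ∃ g, o = some (Sum.inl g) := by
  rcases o with _ | g | v
  · simp [codeP] at h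
  · exact ⟨g, rfl⟩
  · have := v.2
    simp only [codeP] at h
    omega

theorem codeP_le {A : Type} {k : ℕ} (o : Option (A ⊕ Fin (k + 1))) : codeP k o ≤ k + 2 := by
  rcases o with _ | g | v
  · simp [codeP]
  · simp [codeP]
  · have := v.2
    simp only [codeP]
    omega

theorem codeP_eq_H {A : Type} {k : ℕ} (o : Option (A ⊕ Fin (k + 1))) :
    codeP k o = k + 2 ↔ o = none := by
  rcases o with _ | g | v
  · simp [codeP]
  · simp [codeP]
  · have := v.2
    simp only [codeP, reduceCtorEq, iff_false]
    omega

theorem contP_of_ne {A : Type} {k : ℕ} {o : Option (A ⊕ Fin (k + 1))}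
    (h : codeP k o ≠ k + 1) : contP o = none := by
  rcases o with _ | g | v
  · rfl
  · exact absurd rfl h
  · rfl

theorem mem_SLT2 {A : Type} (T : Set (BTile A 2)) (p : Picture A) :
    p ∈ SLTLang 2 T ↔ ∀ i j, i ≤ p.rows → j ≤ p.cols →
      (fun a b : Fin 2 => p.bpix (i + (a : ℕ)) (j + (b : ℕ))) ∈ T := by
  have h1 : borderRows p 2 = p.rows + 2 := by unfold borderRows; omega
  have h2 : borderCols p 2 = p.cols + 2 := by unfold borderCols; omega
  constructor
  · intro h i j hi hj
    exact h ⟨i, j, by omega, by omega, fun a b => rfl⟩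
  · rintro h t ⟨i, j, hi, hj, ht⟩
    have : t = fun a b : Fin 2 => p.bpix (i + (a : ℕ)) (j + (b : ℕ)) := by
      funext a b; exact ht a b
    rw [this]
    exact h i j (by omega) (by omega)

theorem bpix_eq_none {A : Type} (p : Picture A) (i j : ℕ) :
    p.bpix i j = none ↔ ¬ (1 ≤ i ∧ i ≤ p.rows ∧ 1 ≤ j ∧ j ≤ p.cols) := by
  unfold Picture.bpix
  split_ifs with h <;> simp [h]

theorem bpix_succ {A : Type} (p : Picture A) (i j : ℕ) : p.bpix (i+1) (j+1) = p.pget i j := by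
  unfold Picture.bpix Picture.pget
  by_cases h : i < p.rows ∧ j < p.cols
  · rw [dif_pos h, dif_pos (by omega)]
    rfl
  · rw [dif_neg h, dif_neg (by omega)]

theorem bpix_ext {A : Type} {p q : Picture A} (hr : p.rows = q.rows) (hc : p.cols = q.cols)
    (h : ∀ i j, i < p.rows → j < p.cols → p.pget i j = q.pget i j) : p = q := by
  obtain ⟨m, n, hm, hn, f⟩ := p
  obtain ⟨m', n', hm', hn', f'⟩ := q
  obtain rfl : m = m' := hr
  obtain rfl : n = n' := hc
  congr
  funext i j
  have := h i j i.2 j.2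
  simpa [Picture.pget] using this

theorem pget_map {A B : Type} (f : A → B) (p : Picture A) (i j : ℕ) :
    (p.map f).pget i j = (p.pget i j).map f := by
  unfold Picture.pget
  by_cases h : i < p.rows ∧ j < p.cols
  · rw [dif_pos h]; exact dif_pos h
  · rw [dif_neg h]; exact dif_neg h

theorem backward_dir {Sig A : Type} (T' : Set (BTile A 2)) (f : A → Sig) (k : ℕ) (hk : 2 ≤ k)
    (r : Picture (A ⊕ Fin (k + 1))) (hr : r ∈ SLTLang 2 (padTiles k T')) :
    r.map (projP f) ∈ padded k (Picture.map f '' SLTLang 2 T') := by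
  rw [mem_SLT2] at hr
  obtain ⟨m, n, hm1, hn1, hmM, hMk, hnN, hNk, hkM, hkN, hG⟩ :=
    global_of_local k r.rows r.cols hk r.rows_pos r.cols_pos
      (fun i j => codeP k (r.bpix i j))
      (fun i j => by rw [codeP_eq_H, bpix_eq_none]) (fun i j => codeP_le _)
      (fun i j hi hj => (hr i j hi hj).1)
  have hex : ∀ (i : Fin m) (j : Fin n), ∃ g, r.bpix (i+1) (j+1) = some (Sum.inl g) :=
    fun i j => codeP_eq_G ((hG _ _).2 (by omega))
  choose g hgg using hex
  let p' : Picture A := ⟨m, n, hm1, hn1, g⟩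
  have hp : ∀ i j, p'.bpix i j = contP (r.bpix i j) := by
    intro i j
    by_cases h : 1 ≤ i ∧ i ≤ m ∧ 1 ≤ j ∧ j ≤ n
    · obtain ⟨i, rfl⟩ : ∃ x, i = x + 1 := ⟨i - 1, by omega⟩
      obtain ⟨j, rfl⟩ : ∃ x, j = x + 1 := ⟨j - 1, by omega⟩
      have := hgg ⟨i, by omega⟩ ⟨j, by omega⟩
      simp only at this
      rw [this, bpix_succ]
      unfold Picture.pget
      rw [dif_pos ⟨show i < m by omega, show j < n by omega⟩]
      rfl
    · rw [(bpix_eq_none p' i j).2 h, contP_of_ne]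
      exact fun h' => h ((hG i j).1 h')
  have hp' : p' ∈ SLTLang 2 T' := by
    rw [mem_SLT2]
    intro i j hi hj
    replace hi : i ≤ m := hi
    replace hj : j ≤ n := hj
    simp only [hp]
    refine (hr i j (by omega) (by omega)).2 ?_
    by_cases h1 : i = 0 <;> by_cases h2 : j = 0
    · exact ⟨1, 1, (hG _ _).2 (by simp; omega)⟩
    · exact ⟨1, 0, (hG _ _).2 (by simp; omega)⟩
    · exact ⟨0, 1, (hG _ _).2 (by simp; omega)⟩
    · exact ⟨0, 0, (hG _ _).2 (by simp; omega)⟩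
  refine ⟨p'.map f, ⟨p', hp', rfl⟩, hmM, hMk, hnN, hNk, hkM, hkN, ?_⟩
  intro i j hi hj
  replace hi : i < r.rows := hi
  replace hj : j < r.cols := hj
  rw [pget_map, pget_map, ← bpix_succ, ← bpix_succ, hp]
  rcases h : r.bpix (i+1) (j+1) with _ | g | v
  · rw [bpix_eq_none] at h
    omega
  · rfl
  · rfl

theorem codeF_ne_G_le {k m n M N i j : ℕ} (hk : 2 ≤ k)
    (h : 1 ≤ i ∧ i ≤ M ∧ 1 ≤ j ∧ j ≤ N) (h2 : ¬ (i ≤ m ∧ j ≤ n)) :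
    codeF k m n M N i j < k + 1 := by
  have := Nat.mod_lt i (show 0 < k by omega)
  have := Nat.mod_lt j (show 0 < k by omega)
  unfold codeF
  rw [if_pos h, if_neg h2]
  split_ifs <;> omega

theorem forward_dir {Sig A : Type} (T' : Set (BTile A 2)) (f : A → Sig) (k : ℕ) (hk : 2 ≤ k)
    (q : Picture (Option Sig)) (hq : q ∈ padded k (Picture.map f '' SLTLang 2 T')) :
    ∃ r ∈ SLTLang 2 (padTiles k T'), Picture.map (projP f) r = q := by
  obtain ⟨_, ⟨p, hp, rfl⟩, hmM, hMk, hnN, hNk, hkM, hkN, hpix⟩ := hq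
  replace hmM : p.rows < q.rows := hmM
  replace hMk : q.rows ≤ p.rows + k := hMk
  replace hnN : p.cols < q.cols := hnN
  replace hNk : q.cols ≤ p.cols + k := hNk
  have hm := p.rows_pos
  have hn := p.cols_pos
  rw [mem_SLT2] at hp
  let r : Picture (A ⊕ Fin (k + 1)) := ⟨q.rows, q.cols, q.rows_pos, q.cols_pos, fun i j =>
    if h : i.val < p.rows ∧ j.val < p.cols then Sum.inl (p.pix ⟨i, h.1⟩ ⟨j, h.2⟩)
    else Sum.inr ⟨codeF k p.rows p.cols q.rows q.cols (i.val + 1) (j.val + 1),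
      codeF_ne_G_le hk (by omega) (by omega)⟩⟩
  have hb : ∀ i j, codeP k (r.bpix i j) = codeF k p.rows p.cols q.rows q.cols i j ∧
      contP (r.bpix i j) = p.bpix i j := by
    intro i j
    by_cases h : 1 ≤ i ∧ i ≤ q.rows ∧ 1 ≤ j ∧ j ≤ q.cols
    · obtain ⟨i, rfl⟩ : ∃ x, i = x + 1 := ⟨i - 1, by omega⟩
      obtain ⟨j, rfl⟩ : ∃ x, j = x + 1 := ⟨j - 1, by omega⟩
      rw [bpix_succ, bpix_succ]
      unfold Picture.pget
      rw [dif_pos (show i < r.rows ∧ j < r.cols from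
        ⟨show i < q.rows by omega, show j < q.cols by omega⟩)]
      by_cases h2 : i < p.rows ∧ j < p.cols
      · rw [dif_pos h2, codeF_G h (by omega)]
        simp only [r, dif_pos h2]
        exact ⟨rfl, rfl⟩
      · rw [dif_neg h2]
        simp only [r, dif_neg h2]
        exact ⟨rfl, rfl⟩
    · rw [(bpix_eq_none r i j).2 h, (bpix_eq_none p i j).2 (by omega), codeF_H h]
      exact ⟨rfl, rfl⟩
  refine ⟨r, ?_, ?_⟩
  · rw [mem_SLT2]
    intro i j hi hj
    refine ⟨?_, ?_⟩
    · simp only [hb]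
      exact local_of_global k p.rows p.cols q.rows q.cols hk hm hn hmM hMk hnN hNk hkM hkN
        i j hi hj
    · rintro ⟨a, b, hab⟩
      simp only [hb] at hab ⊢
      apply hp
      · by_contra hc
        by_cases hin : 1 ≤ i + a.val ∧ i + a.val ≤ q.rows ∧ 1 ≤ j + b.val ∧ j + b.val ≤ q.cols
        · have := codeF_ne_G_le (m := p.rows) (n := p.cols) hk hin (by omega)
          omega
        · rw [codeF_H hin] at hab
          omega
      · by_contra hc
        by_cases hin : 1 ≤ i + a.val ∧ i + a.val ≤ q.rows ∧ 1 ≤ j + b.val ∧ j + b.val ≤ q.cols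
        · have := codeF_ne_G_le (m := p.rows) (n := p.cols) hk hin (by omega)
          omega
        · rw [codeF_H hin] at hab
          omega
  · refine bpix_ext rfl rfl ?_
    intro i j hi hj
    replace hi : i < q.rows := hi
    replace hj : j < q.cols := hj
    rw [hpix i j hi hj, pget_map, pget_map, ← bpix_succ, ← bpix_succ, ← (hb _ _).2]
    rcases h : r.bpix (i+1) (j+1) with _ | g | v
    · rw [bpix_eq_none] at h
      exact absurd ⟨by omega, show i + 1 ≤ q.rows by omega, by omega,
        show j + 1 ≤ q.cols by omega⟩ h
    · rfl
    · rfl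


/-- If `R ⊆ Σ^{++}` is recognized by a tiling system with local alphabet
`Γ'`, then for every `k ≥ 2` the padded language `R^(k)` is recognized by a
tiling system whose local alphabet has cardinality `|Γ'| + k + 1`. -/
theorem padded_tiling_system_size :
    ∀ (Sig : Type) (_ : Fintype Sig) (R : Set (Picture Sig))
      (Gam' : Type) (_ : Fintype Gam') (T' : Set (BTile Gam' 2)) (π' : Gam' → Sig),
      R = Picture.map π' '' SLTLang 2 T' →
      ∀ k : ℕ, 2 ≤ k →
        ∃ (Gam : Type) (_ : Fintype Gam),
          Fintype.card Gam = Fintype.card Gam' + k + 1 ∧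
          ∃ (T : Set (BTile Gam 2)) (π : Gam → Option Sig),
            padded k R = Picture.map π '' SLTLang 2 T := by
  intro Sig _ R Gam' _ T' π' hR k hk
  refine ⟨Gam' ⊕ Fin (k + 1), inferInstance, ?_, padTiles k T', projP π', ?_⟩
  · rw [Fintype.card_sum, Fintype.card_fin]
    omega
  · subst hR
    ext q
    constructor
    · intro hq
      exact forward_dir T' π' k hk q hq
    · rintro ⟨r, hr, rfl⟩
      exact backward_dir T' π' k hk r hr
end
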